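/- arXiv:2106.10473 — 2 statements merged into one kernel-verified Lean document; each statement's English description precedes it below -/
import Mathlib

section
/- For each fixed participating requester r ∈ R̃, the per-requester improvement function M ↦ I_r(M) = |V(r,τ;G̃(M)) \ V(r,τ;G)| is monotone nondecreasing and submodular in the supplier set M: for all supplier sets A ⊆ B and any supplier u ∉ B, I_r(A) ≤ I_r(B) and I_r(A∪{u}) − I_r(A) ≥ I_r(B∪{u}) − I_r(B). -/
/-- `walkLen E n v u` : there is a directed walk of exactly `n` edges from `v` to `u`. -/
def walkLen {U : Type*} (E : U → U → Prop) : ℕ → U → U → Prop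
  | 0, v, u => v = u
  | n + 1, v, u => ∃ w, E v w ∧ walkLen E n w u

/-- Directed distance from `v` to `u` (`+∞` if `u` is not reachable from `v`). -/
noncomputable def graphDist {U : Type*} (E : U → U → Prop) (v u : U) : ℕ∞ :=
  sInf {n : ℕ∞ | ∃ m : ℕ, (m : ℕ∞) = n ∧ walkLen E m v u}

/-- The `d`-visible set of `u` : all `v` with `D(v,u;G) ≤ d`. -/
noncomputable def visSet {U : Type*} (E : U → U → Prop) (u : U) (d : ℕ) : Set U :=
  {v | graphDist E v u ≤ (d : ℕ∞)}

/-- Edge relation of `G̃(M) = (U, E ∪ (M × R̃))`: the graph obtained from `G` by adding an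
edge from each supplier in `M` to each requester in `R̃`. -/
def newE {U : Type*} (E : U → U → Prop) (Rt M : Finset U) : U → U → Prop :=
  fun a b => E a b ∨ (a ∈ M ∧ b ∈ Rt)

/-- `I_r(M) = |V(r,τ;G̃(M)) \ V(r,τ;G)|`, the improvement of social visibility of
requester `r` when the set of participating suppliers is `M`. -/
noncomputable def improvement {U : Type*} (E : U → U → Prop) (τ : ℕ) (Rt : Finset U)
    (r : U) (M : Finset U) : ℕ :=
  ((visSet (newE E Rt M) r τ) \ (visSet E r τ)).ncard

theorem mem_visSet_iff {U : Type*} {E : U → U → Prop} {u v : U} {d : ℕ} :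
    v ∈ visSet E u d ↔ ∃ n ≤ d, walkLen E n v u := by
  constructor
  · intro h
    have hne : {n : ℕ∞ | ∃ m : ℕ, (m : ℕ∞) = n ∧ walkLen E m v u}.Nonempty := by
      by_contra hempty
      rw [Set.not_nonempty_iff_eq_empty] at hempty
      simp [visSet, graphDist, hempty] at h
    obtain ⟨m, hm, hwalk⟩ := csInf_mem hne
    refine ⟨m, ?_, hwalk⟩
    have hmd : (m : ℕ∞) ≤ d := hm.trans_le h
    exact_mod_cast hmd
  · rintro ⟨n, hnd, hwalk⟩
    have hn : graphDist E v u ≤ n := sInf_le ⟨n, rfl, hwalk⟩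
    exact hn.trans (by exact_mod_cast hnd)

theorem walkLen.mono {U : Type*} {E F : U → U → Prop} (hEF : ∀ a b, E a b → F a b)
    {n : ℕ} {v u : U} (h : walkLen E n v u) : walkLen F n v u := by
  induction n generalizing v with
  | zero => exact h
  | succ n ih =>
    obtain ⟨w, hvw, hw⟩ := h
    exact ⟨w, hEF v w hvw, ih hw⟩

theorem visSet_mono {U : Type*} {E F : U → U → Prop} (hEF : ∀ a b, E a b → F a b)
    (u : U) (d : ℕ) : visSet E u d ⊆ visSet F u d := by
  intro v hv
  obtain ⟨n, hnd, hwalk⟩ := mem_visSet_iff.1 hv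
  exact mem_visSet_iff.2 ⟨n, hnd, hwalk.mono hEF⟩

/-- A walk to a requester `r` can be cut short at its first new edge by going straight to `r`,
so that it uses at most one supplier, which lies in `A` or in `B`. -/
theorem exists_walkLen_of_walkLen_union {U : Type*} [DecidableEq U] {E : U → U → Prop}
    {Rt A B : Finset U} {r : U} (hr : r ∈ Rt) {n : ℕ} {v : U}
    (h : walkLen (newE E Rt (A ∪ B)) n v r) :
    (∃ k ≤ n, walkLen (newE E Rt A) k v r) ∨ ∃ k ≤ n, walkLen (newE E Rt B) k v r := by
  induction n generalizing v with
  | zero => exact Or.inl ⟨0, le_rfl, h⟩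
  | succ n ih =>
    obtain ⟨w, hE | ⟨hv, -⟩, hw⟩ := h
    · refine (ih hw).imp ?_ ?_ <;>
      · rintro ⟨k, hk, hwalk⟩
        exact ⟨k + 1, by omega, w, Or.inl hE, hwalk⟩
    · refine (Finset.mem_union.1 hv).imp ?_ ?_ <;>
      · intro hv
        exact ⟨1, by omega, r, Or.inr ⟨hv, hr⟩, rfl⟩

theorem visSet_newE_union {U : Type*} [DecidableEq U] (E : U → U → Prop) {Rt : Finset U}
    {r : U} (hr : r ∈ Rt) (A B : Finset U) (d : ℕ) :
    visSet (newE E Rt (A ∪ B)) r d = visSet (newE E Rt A) r d ∪ visSet (newE E Rt B) r d := by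
  apply Set.Subset.antisymm
  · intro v hv
    obtain ⟨n, hnd, hwalk⟩ := mem_visSet_iff.1 hv
    refine (exists_walkLen_of_walkLen_union hr hwalk).imp ?_ ?_ <;>
    · rintro ⟨k, hkn, hk⟩
      exact mem_visSet_iff.2 ⟨k, hkn.trans hnd, hk⟩
  · refine Set.union_subset (visSet_mono ?_ r d) (visSet_mono ?_ r d)
    · exact fun a b => Or.imp_right (And.imp_left (Finset.mem_union_left B ·))
    · exact fun a b => Or.imp_right (And.imp_left (Finset.mem_union_right A ·))

/-- The cardinality of a union is submodular. -/
theorem ncard_union_add_ncard_le {U : Type*} [Finite U] {S T : Set U} (hST : S ⊆ T)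
    (X : Set U) : (T ∪ X).ncard + S.ncard ≤ (S ∪ X).ncard + T.ncard := by
  have hS := Set.ncard_sdiff_add_ncard X S
  have hT := Set.ncard_sdiff_add_ncard X T
  have hle : (X \ T).ncard ≤ (X \ S).ncard := Set.ncard_le_ncard (Set.sdiff_subset_sdiff_right hST)
  rw [Set.union_comm] at hS hT
  omega

/-- for each fixed participating requester `r ∈ R̃`, the per-requester
improvement `M ↦ I_r(M)` is monotone nondecreasing and submodular in the supplier set. -/
theorem improvement_monotone_submodular
    {U : Type*} [Fintype U] [DecidableEq U] (E : U → U → Prop)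
    (hNoLoop : ∀ u : U, ¬ E u u) (τ : ℕ) (Rt : Finset U) (r : U) (hr : r ∈ Rt)
    (A B : Finset U) (hAB : A ⊆ B) (u : U) (hu : u ∉ B) :
    improvement E τ Rt r A ≤ improvement E τ Rt r B ∧
      (improvement E τ Rt r (A ∪ {u}) : ℤ) - (improvement E τ Rt r A : ℤ) ≥
        (improvement E τ Rt r (B ∪ {u}) : ℤ) - (improvement E τ Rt r B : ℤ) := by
  have hsub : visSet (newE E Rt A) r τ \ visSet E r τ ⊆ visSet (newE E Rt B) r τ \ visSet E r τ :=
    Set.sdiff_subset_sdiff_left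
      (visSet_mono (fun a b => Or.imp_right (And.imp_left (hAB ·))) r τ)
  refine ⟨Set.ncard_le_ncard hsub, ?_⟩
  have hle := ncard_union_add_ncard_le hsub (visSet (newE E Rt {u}) r τ \ visSet E r τ)
  rw [← Set.union_sdiff_distrib, ← Set.union_sdiff_distrib, ← visSet_newE_union E hr,
    ← visSet_newE_union E hr] at hle
  unfold improvement
  omega
end

section
/- Sample complexity of the Shapley value estimator: under the same setting (marginal contributions X(σ) ∈ [0,c] for all orderings σ, and φ̂_u the average of X over K independent uniformly random orderings), for every accuracy t > 0 and confidence δ ∈ (0,1], if K ≥ (c²/(2t²)) · ln(2/δ), then with probability at least 1 − δ, | φ̂_u − φ_u(v) | ≤ t. In particular, the approximation error can be made arbitrarily small by choosing K sufficiently large. -/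
/-- `predsIn σ u` : the set of players that precede `u` in the ordering `σ` of the
players, where an ordering of the `n` players is a bijection `Fin n ≃ ι`. -/
def predsIn {ι : Type*} [Fintype ι] [DecidableEq ι] {n : ℕ} (σ : Fin n ≃ ι) (u : ι) :
    Finset ι :=
  Finset.univ.filter (fun w => σ.symm w < σ.symm u)

/-- The marginal contribution of `u` in the ordering `σ`:
`X(σ) = v(P_σ(u) ∪ {u}) − v(P_σ(u))`. -/
def marginal {ι : Type*} [Fintype ι] [DecidableEq ι] {n : ℕ}
    (v : Finset ι → ℝ) (u : ι) (σ : Fin n ≃ ι) : ℝ :=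
  v (insert u (predsIn σ u)) - v (predsIn σ u)

/-- The Shapley value of player `u`:
`φ_u(v) = Σ_{S ⊆ N\{u}} (|S|!·(n−|S|−1)!/n!)·(v(S∪{u}) − v(S))` with `n = |N|`. -/
noncomputable def shapleyValue {ι : Type*} [Fintype ι] [DecidableEq ι]
    (v : Finset ι → ℝ) (u : ι) : ℝ :=
  ∑ S ∈ (Finset.univ.erase u).powerset,
    ((S.card.factorial : ℝ) * ((Fintype.card ι - S.card - 1).factorial : ℝ) /
        ((Fintype.card ι).factorial : ℝ)) *
      (v (insert u S) - v S)

open MeasureTheory ProbabilityTheory in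
/-- Hoeffding's lemma for the uniform distribution on a finite type, in counting form. -/
lemma sum_exp_mul_sub_avg_le {Ω : Type*} [Fintype Ω] [Nonempty Ω] {X : Ω → ℝ} {c : ℝ}
    (hX : ∀ a, X a ∈ Set.Icc 0 c) (s : ℝ) :
    ∑ a, Real.exp (s * (X a - (∑ b, X b) / Fintype.card Ω)) ≤
      Fintype.card Ω * Real.exp (s ^ 2 * c ^ 2 / 8) := by
  classical
  let _ : MeasurableSpace Ω := ⊤
  have : MeasurableSingletonClass Ω := ⟨fun _ => trivial⟩
  have hint (f : Ω → ℝ) : ∫ a, f a ∂(uniformOn Set.univ) = (∑ a, f a) / Fintype.card Ω := by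
    rw [integral_fintype (Integrable.of_finite), Finset.sum_div]
    refine Finset.sum_congr rfl fun a _ => ?_
    simp [Measure.real, uniformOn_univ]
    ring
  have h := (hasSubgaussianMGF_of_mem_Icc (μ := uniformOn (Set.univ : Set Ω))
    (measurable_of_finite X).aemeasurable (Filter.Eventually.of_forall hX)).mgf_le s
  rw [mgf, hint, hint, div_le_iff₀ (by exact_mod_cast Fintype.card_pos)] at h
  refine h.trans_eq ?_
  rw [mul_comm]
  congr 2
  simp only [NNReal.coe_pow, NNReal.coe_div, coe_nnnorm, sub_zero, Real.norm_eq_abs,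
    NNReal.coe_ofNat, div_pow, sq_abs]
  ring

/-- Chernoff's bound for sums of `K` independent uniform samples, in counting form. -/
lemma card_lt_sum_le_of_sum_exp_le {Ω : Type*} [Fintype Ω] {Y : Ω → ℝ} {c t : ℝ}
    (hc : 0 < c) (ht : 0 < t)
    (hY : ∀ s : ℝ, ∑ a, Real.exp (s * Y a) ≤ Fintype.card Ω * Real.exp (s ^ 2 * c ^ 2 / 8))
    (K : ℕ) :
    ((Finset.univ.filter fun ω : Fin K → Ω => K * t < ∑ k, Y (ω k)).card : ℝ) ≤
      (Fintype.card Ω : ℝ) ^ K * Real.exp (-(2 * K * t ^ 2 / c ^ 2)) := by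
  set s : ℝ := 4 * t / c ^ 2 with hs
  have hs0 : 0 < s := by positivity
  calc ((Finset.univ.filter fun ω : Fin K → Ω => K * t < ∑ k, Y (ω k)).card : ℝ)
      = ∑ ω : Fin K → Ω, if K * t < ∑ k, Y (ω k) then (1 : ℝ) else 0 := by
        simp
    _ ≤ ∑ ω : Fin K → Ω, Real.exp (-(s * (K * t))) * ∏ k, Real.exp (s * Y (ω k)) := by
        refine Finset.sum_le_sum fun ω _ => ?_
        rw [← Real.exp_sum, ← Real.exp_add, ← Finset.mul_sum]
        split_ifs with h
        · exact Real.one_le_exp (by nlinarith)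
        · positivity
    _ = Real.exp (-(s * (K * t))) * (∑ a, Real.exp (s * Y a)) ^ K := by
        rw [← Finset.mul_sum, Fintype.sum_pow]
    _ ≤ Real.exp (-(s * (K * t))) *
          (Fintype.card Ω * Real.exp (s ^ 2 * c ^ 2 / 8)) ^ K := by
        gcongr
        exact hY s
    _ = (Fintype.card Ω : ℝ) ^ K * Real.exp (-(2 * K * t ^ 2 / c ^ 2)) := by
        rw [mul_pow, ← Real.exp_nat_mul, mul_left_comm, ← Real.exp_add]
        congr 2
        rw [hs]
        field_simp
        ring

/-- The number of bijections that intertwine two labellings with equinumerous fibres. -/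
lemma card_equiv_comp_eq {α β γ : Type*} [Fintype α] [Fintype β] [Fintype γ] [DecidableEq α]
    [DecidableEq β] [DecidableEq γ] (f : β → γ) (h : α → γ)
    (hcard : ∀ i, Fintype.card {a // h a = i} = Fintype.card {b // f b = i}) :
    Fintype.card {σ : α ≃ β // f ∘ σ = h} = ∏ i, (Fintype.card {b // f b = i}).factorial := by
  let e : α ≃ β := Equiv.ofFiberEquiv fun i => Fintype.equivOfCardEq (hcard i)
  have he : f ∘ e = h := funext fun a => Equiv.ofFiberEquiv_map _ a
  rw [← DomMulAct.stabilizer_card f]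
  refine Fintype.card_congr (Equiv.subtypeEquiv (e.equivCongr (Equiv.refl β)) fun σ => ?_)
  rw [← he]
  constructor
  · intro hσ
    funext b
    simpa using congrFun hσ (e.symm b)
  · intro hσ
    funext a
    simpa using congrFun hσ (e a)

section Orderings

variable {ι : Type*} [Fintype ι] [DecidableEq ι] {n : ℕ}

lemma card_predsIn (σ : Fin n ≃ ι) (u : ι) : (predsIn σ u).card = σ.symm u := by
  have : predsIn σ u = (Finset.Iio (σ.symm u)).map σ.toEmbedding := by
    ext w
    simp [predsIn, Finset.mem_map_equiv]
  rw [this, Finset.card_map, Fin.card_Iio]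

/-- The number of orderings in which the set of predecessors of `u` is `S`. -/
lemma card_filter_predsIn_eq (hn : n = Fintype.card ι) {u : ι} {S : Finset ι} (hu : u ∉ S) :
    (Finset.univ.filter fun σ : Fin n ≃ ι => predsIn σ u = S).card =
      S.card.factorial * (n - S.card - 1).factorial := by
  have hlt : S.card < n := by
    rw [hn]
    exact Finset.card_lt_univ_of_notMem hu
  let k : Fin n := ⟨S.card, hlt⟩
  let f : ι → Ordering := fun w => if w ∈ S then .lt else if w = u then .eq else .gt
  let h : Fin n → Ordering := fun i => cmp i k
  have f_lt (w : ι) : f w = .lt ↔ w ∈ S := by grind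
  have f_eq (w : ι) : f w = .eq ↔ w = u := by grind
  have f_gt (w : ι) : f w = .gt ↔ w ∈ (insert u S)ᶜ := by
    simp only [Finset.mem_compl, Finset.mem_insert]; grind
  have iff_comp (σ : Fin n ≃ ι) : predsIn σ u = S ↔ f ∘ σ = h := by
    constructor
    · intro hσ
      have hk : σ.symm u = k := Fin.ext (by rw [← card_predsIn, hσ])
      have hmem (i : Fin n) : σ i ∈ S ↔ i < k := by
        rw [← hσ, ← hk]; simp [predsIn]
      have hu' : σ k = u := by rw [← hk]; simp
      funext i
      rcases lt_trichotomy i k with hi | hi | hi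
      · rw [Function.comp_apply, (f_lt _).2 ((hmem i).2 hi), eq_comm]
        exact cmp_eq_lt_iff _ _ |>.2 hi
      · rw [Function.comp_apply, (f_eq _).2 (hi ▸ hu'), eq_comm]
        exact cmp_eq_eq_iff _ _ |>.2 hi
      · rw [Function.comp_apply, (f_gt _).2, eq_comm]
        · exact cmp_eq_gt_iff _ _ |>.2 hi
        · rw [Finset.mem_compl, Finset.mem_insert, hmem, ← hu', σ.apply_eq_iff_eq]
          exact not_or.2 ⟨hi.ne', hi.not_gt⟩
    · intro hσ
      have hk : σ.symm u = k := by
        rw [Equiv.symm_apply_eq, eq_comm, ← f_eq]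
        exact (congrFun hσ k).trans (cmp_eq_eq_iff _ _ |>.2 rfl)
      ext w
      have hw : f w = cmp (σ.symm w) k := by simpa using congrFun hσ (σ.symm w)
      rw [← f_lt, hw, cmp_eq_lt_iff, ← hk]
      simp [predsIn]
  have card_lt : Fintype.card {b // f b = .lt} = S.card :=
    Fintype.card_of_subtype _ fun w => (f_lt w).symm
  have card_eq : Fintype.card {b // f b = .eq} = 1 :=
    Fintype.card_of_subtype {u} fun w => by rw [f_eq, Finset.mem_singleton]
  have card_gt : Fintype.card {b // f b = .gt} = n - S.card - 1 := by
    rw [Fintype.card_of_subtype _ fun w => (f_gt w).symm, Finset.card_compl,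
      Finset.card_insert_of_notMem hu, hn, Nat.sub_sub]
  have hcard (i : Ordering) : Fintype.card {a // h a = i} = Fintype.card {b // f b = i} := by
    cases i
    · rw [card_lt, Fintype.card_of_subtype (Finset.Iio k) fun a => ?_, Fin.card_Iio]
      rw [Finset.mem_Iio, cmp_eq_lt_iff]
    · rw [card_eq, Fintype.card_of_subtype {k} fun a => ?_, Finset.card_singleton]
      rw [Finset.mem_singleton, cmp_eq_eq_iff]
    · rw [card_gt, Fintype.card_of_subtype (Finset.Ioi k) fun a => ?_, Fin.card_Ioi]
      · change n - 1 - S.card = _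
        omega
      · rw [Finset.mem_Ioi, cmp_eq_gt_iff]
  rw [← Fintype.card_subtype, Fintype.card_congr (Equiv.subtypeEquivRight iff_comp),
    card_equiv_comp_eq f h hcard]
  have huniv : (Finset.univ : Finset Ordering) = {.lt, .eq, .gt} := rfl
  rw [huniv, Finset.prod_insert (by decide), Finset.prod_insert (by decide),
    Finset.prod_singleton, card_lt, card_eq, card_gt, Nat.factorial_one, one_mul]

/-- The Shapley value is the average of the marginal contributions over all orderings. -/
lemma sum_marginal_div_card_eq_shapleyValue (hn : n = Fintype.card ι)
    (v : Finset ι → ℝ) (u : ι) :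
    (∑ σ : Fin n ≃ ι, marginal v u σ) / Fintype.card (Fin n ≃ ι) = shapleyValue v u := by
  have hcard : Fintype.card (Fin n ≃ ι) = n.factorial := by
    rw [Fintype.card_equiv (Fintype.equivOfCardEq (by simpa using hn)), Fintype.card_fin]
  have hmaps : ∀ σ ∈ (Finset.univ : Finset (Fin n ≃ ι)),
      predsIn σ u ∈ (Finset.univ.erase u).powerset := by
    intro σ _
    rw [Finset.mem_powerset, Finset.subset_erase]
    simp [predsIn]
  rw [← Finset.sum_fiberwise_of_maps_to hmaps, shapleyValue, Finset.sum_div]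
  refine Finset.sum_congr rfl fun S hS => ?_
  have hu : u ∉ S := (Finset.subset_erase.1 (Finset.mem_powerset.1 hS)).2
  have hconst : ∀ σ ∈ Finset.univ.filter (fun σ : Fin n ≃ ι => predsIn σ u = S),
      marginal v u σ = v (insert u S) - v S := by
    intro σ hσ
    rw [marginal, (Finset.mem_filter.1 hσ).2]
  rw [Finset.sum_congr rfl hconst, Finset.sum_const, card_filter_predsIn_eq hn hu, hcard, ← hn,
    nsmul_eq_mul]
  push_cast
  ring

end Orderings

/-- sample complexity of the Shapley value estimator: if all marginal
contributions lie in `[0,c]` and `K ≥ (c²/(2t²))·ln(2/δ)`, then with probability at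
least `1 − δ` (under the uniform distribution on `K`-tuples of orderings, modelled by
counting), the average of the marginal contribution over the `K` sampled orderings is
within `t` of the Shapley value `φ_u(v)`. -/
theorem shapley_sampling_sample_complexity
    {ι : Type*} [Fintype ι] [DecidableEq ι]
    (n : ℕ) (hn : n = Fintype.card ι) (hn1 : 1 ≤ n)
    (v : Finset ι → ℝ) (u : ι) (c : ℝ) (hc : 0 < c)
    (hX : ∀ σ : Fin n ≃ ι, 0 ≤ marginal v u σ ∧ marginal v u σ ≤ c)
    (t : ℝ) (ht : 0 < t) (δ : ℝ) (hδ : δ ∈ Set.Ioc (0 : ℝ) 1)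
    (K : ℕ) (hK : (K : ℝ) ≥ (c ^ 2 / (2 * t ^ 2)) * Real.log (2 / δ)) :
    (({ω : Fin K → (Fin n ≃ ι) |
        |(1 / (K : ℝ)) * (∑ k : Fin K, marginal v u (ω k)) - shapleyValue v u| ≤ t} :
          Set _).ncard : ℝ)
      ≥ (1 - δ) * (Fintype.card (Fin K → (Fin n ≃ ι)) : ℝ) := by
  classical
  have : Nonempty (Fin n ≃ ι) := ⟨Fintype.equivOfCardEq (by simpa using hn)⟩
  obtain ⟨hδ0, hδ1⟩ := hδ
  have hK0 : (0 : ℝ) < K := by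
    have : 0 < Real.log (2 / δ) := Real.log_pos (by rw [lt_div_iff₀ hδ0]; linarith)
    exact lt_of_lt_of_le (by positivity) hK
  have htail : Real.exp (-(2 * K * t ^ 2 / c ^ 2)) ≤ δ / 2 := by
    rw [← Real.le_log_iff_exp_le (by positivity), ← inv_div 2 δ, Real.log_inv, neg_le_neg_iff]
    calc Real.log (2 / δ)
        = 2 * (c ^ 2 / (2 * t ^ 2) * Real.log (2 / δ)) * t ^ 2 / c ^ 2 := by field_simp
      _ ≤ 2 * K * t ^ 2 / c ^ 2 := by gcongr
  let Y : (Fin n ≃ ι) → ℝ := fun σ => marginal v u σ - shapleyValue v u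
  have hmgf (s : ℝ) : ∑ σ, Real.exp (s * Y σ) ≤
      Fintype.card (Fin n ≃ ι) * Real.exp (s ^ 2 * c ^ 2 / 8) := by
    have h := sum_exp_mul_sub_avg_le hX s
    rwa [sum_marginal_div_card_eq_shapleyValue hn] at h
  have hmgf_neg (s : ℝ) : ∑ σ, Real.exp (s * -Y σ) ≤
      Fintype.card (Fin n ≃ ι) * Real.exp (s ^ 2 * c ^ 2 / 8) := by
    simpa using hmgf (-s)
  let upper := Finset.univ.filter fun ω : Fin K → (Fin n ≃ ι) => K * t < ∑ k, Y (ω k)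
  let lower := Finset.univ.filter fun ω : Fin K → (Fin n ≃ ι) => K * t < ∑ k, -Y (ω k)
  let good := Finset.univ.filter fun ω : Fin K → (Fin n ≃ ι) =>
    |(1 / (K : ℝ)) * (∑ k : Fin K, marginal v u (ω k)) - shapleyValue v u| ≤ t
  have hupper := card_lt_sum_le_of_sum_exp_le hc ht hmgf K
  have hlower := card_lt_sum_le_of_sum_exp_le hc ht hmgf_neg K
  have hcover : (Finset.univ : Finset (Fin K → (Fin n ≃ ι))) ⊆ good ∪ (upper ∪ lower) := by
    intro ω _
    simp only [good, upper, lower, Finset.mem_union, Finset.mem_filter, Finset.mem_univ,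
      true_and]
    by_contra! hω
    obtain ⟨hgood, hup, hlow⟩ := hω
    have hdev : (1 / (K : ℝ)) * (∑ k : Fin K, marginal v u (ω k)) - shapleyValue v u =
        (∑ k, Y (ω k)) / K := by
      simp only [Y, Finset.sum_sub_distrib, Finset.sum_const, Finset.card_univ,
        Fintype.card_fin, nsmul_eq_mul]
      field_simp
    rw [Finset.sum_neg_distrib] at hlow
    refine hgood.not_ge ?_
    rw [hdev, abs_div, abs_of_pos hK0, div_le_iff₀ hK0, mul_comm, abs_le]
    constructor <;> linarith
  have hcount : (Fintype.card (Fin K → (Fin n ≃ ι)) : ℝ) ≤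
      good.card + (upper.card + lower.card) := by
    exact_mod_cast (Finset.card_le_card hcover).trans ((Finset.card_union_le _ _).trans
      (Nat.add_le_add_left (Finset.card_union_le _ _) _))
  have hpow : (Fintype.card (Fin K → (Fin n ≃ ι)) : ℝ) =
      (Fintype.card (Fin n ≃ ι) : ℝ) ^ K := by
    simp [Fintype.card_pi]
  have hbound := mul_le_mul_of_nonneg_left htail
    (Nat.cast_nonneg (α := ℝ) (Fintype.card (Fin K → (Fin n ≃ ι))))
  rw [← hpow] at hupper hlower
  have hgood : ({ω : Fin K → (Fin n ≃ ι) |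
      |(1 / (K : ℝ)) * (∑ k : Fin K, marginal v u (ω k)) - shapleyValue v u| ≤ t} :
        Set _).ncard = good.card := by
    rw [← Set.ncard_coe_finset]
    congr 1
    ext ω
    simp [good]
  rw [hgood]
  change (upper.card : ℝ) ≤ _ at hupper
  change (lower.card : ℝ) ≤ _ at hlower
  linarith
end
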